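/- Let β be a dimension vector of Q and σ ∈ ℤ^{Q_0} an integral weight. Then there exists a σ-stable representation of Q of dimension vector β if and only if β is non-zero, σ(β)=0, and σ(β')<0 for every dimension vector β' with β' ↪ β and β' ≠ 0, β. -/

import Mathlib

set_option autoImplicit false

noncomputable section

open scoped BigOperators

/-! Basic setup for representations of a quiver with vertex set `V`, arrow set `A`,
tail map `t` and head map `h`, over a field `K`. -/

variable (K : Type) [Field K]
variable {V A : Type} [Fintype V] [DecidableEq V] [Fintype A]

/-- The Euler form of the quiver `(V, A, t, h)`. -/
def eulerForm {R : Type} [CommRing R] (t h : A → V) (x y : V → R) : R :=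
  ∑ i, x i * y i - ∑ a, x (t a) * y (h a)

def natZ (x : V → ℕ) : V → ℤ := fun i => (x i : ℤ)
def intQ (x : V → ℤ) : V → ℚ := fun i => (x i : ℚ)
def natQ (x : V → ℕ) : V → ℚ := fun i => (x i : ℚ)

/-- The weight `⟨α,·⟩`. -/
def weightL (t h : A → V) (α : V → ℤ) : V → ℤ :=
  fun i => eulerForm t h α (fun j => if j = i then 1 else 0)

/-- The weight `−⟨·,α⟩`. -/
def weightR (t h : A → V) (α : V → ℤ) : V → ℤ :=
  fun i => - eulerForm t h (fun j => if j = i then 1 else 0) α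

/-- `IsPathFrom t h i p j` : the list of arrows `p` is a path from `i` to `j`. -/
def IsPathFrom (t h : A → V) : V → List A → V → Prop
  | i, [], j => i = j
  | i, a :: p, j => t a = i ∧ IsPathFrom t h (h a) p j

/-- The quiver has no (nontrivial) oriented cycles. -/
def Acyclic (t h : A → V) : Prop := ∀ (i : V) (p : List A), IsPathFrom t h i p i → p = []

/-- The dimension vector `γ_i` of the projective indecomposable at `i`:
`γ_i(j)` is the number of paths from `i` to `j`. -/
def gammaRoot (t h : A → V) (i : V) : V → ℕ :=
  fun j => Set.ncard {p : List A | IsPathFrom t h i p j}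

/-- A finite-dimensional representation of the quiver `(V, A, t, h)` over `K`. -/
structure QuivRep (K : Type) [Field K] (V A : Type) (t h : A → V) : Type 1 where
  sp : V → Type
  [inst1 : ∀ i, AddCommGroup (sp i)]
  [inst2 : ∀ i, Module K (sp i)]
  [inst3 : ∀ i, FiniteDimensional K (sp i)]
  map : ∀ a : A, sp (t a) →ₗ[K] sp (h a)

attribute [instance] QuivRep.inst1 QuivRep.inst2 QuivRep.inst3

namespace QuivRep

variable {K} {t h : A → V}

/-- The dimension vector of a representation. -/
def dimVec (X : QuivRep K V A t h) : V → ℕ := fun i => Module.finrank K (X.sp i)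

/-- A subrepresentation. -/
structure Sub (X : QuivRep K V A t h) where
  sub : ∀ i, Submodule K (X.sp i)
  le : ∀ a : A, ∀ x ∈ sub (t a), X.map a x ∈ sub (h a)

/-- The dimension vector of a subrepresentation. -/
def Sub.dimVec {X : QuivRep K V A t h} (U : Sub X) : V → ℕ :=
  fun i => Module.finrank K (U.sub i)

/-- The space `Hom_Q(X,Y)` of morphisms of representations, as a submodule of
`Π i, Hom_K(X(i),Y(i))`. -/
def homS (X Y : QuivRep K V A t h) : Submodule K (∀ i, X.sp i →ₗ[K] Y.sp i) where
  carrier := {φ | ∀ a : A, (φ (h a)).comp (X.map a) = (Y.map a).comp (φ (t a))}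
  zero_mem' := by intro a; simp
  add_mem' := by
    intro f g hf hg a
    simp only [Pi.add_apply, LinearMap.add_comp, LinearMap.comp_add, hf a, hg a]
  smul_mem' := by
    intro c f hf a
    simp only [Pi.smul_apply, LinearMap.smul_comp, LinearMap.comp_smul, hf a]

/-- The dimension of `Hom_Q(X,Y)`. -/
def homDim (X Y : QuivRep K V A t h) : ℕ := Module.finrank K (homS X Y)

/-- The map `d^X_Y` from Ringel's canonical exact sequence. -/
def dmap (X Y : QuivRep K V A t h) :
    (∀ i, X.sp i →ₗ[K] Y.sp i) →ₗ[K] (∀ a : A, X.sp (t a) →ₗ[K] Y.sp (h a)) where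
  toFun φ := fun a => (φ (h a)).comp (X.map a) - (Y.map a).comp (φ (t a))
  map_add' f g := by
    funext a
    simp only [Pi.add_apply, LinearMap.add_comp, LinearMap.comp_add]
    abel
  map_smul' c f := by
    funext a
    simp only [Pi.smul_apply, LinearMap.smul_comp, LinearMap.comp_smul, smul_sub,
      RingHom.id_apply]

/-- The dimension of `Ext^1_Q(X,Y)`, i.e. of the cokernel of `d^X_Y`. -/
def extDim (X Y : QuivRep K V A t h) : ℕ :=
  Module.finrank K ((∀ a : A, X.sp (t a) →ₗ[K] Y.sp (h a)) ⧸ LinearMap.range (dmap X Y))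

/-- A rigid representation: `Ext^1_Q(X,X) = 0`. -/
def IsRigid (X : QuivRep K V A t h) : Prop := extDim X X = 0

/-- A Schur representation: `End_Q(X) = K·id`. -/
def IsSchur (X : QuivRep K V A t h) : Prop := homDim X X = 1

/-- An exceptional representation: rigid and Schur. -/
def IsExceptional (X : QuivRep K V A t h) : Prop := IsRigid X ∧ IsSchur X

end QuivRep

/-- `β` is a real Schur root: the dimension vector of an exceptional representation. -/
def isRealSchurRoot (t h : A → V) (β : V → ℕ) : Prop :=
  ∃ X : QuivRep K V A t h, X.dimVec = β ∧ X.IsExceptional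

/-- `ext_Q(α,β)` : the generic (minimal) value of `dim Ext^1_Q` on pairs of
representations of dimension vectors `α`, `β`. -/
def extMin (t h : A → V) (α β : V → ℕ) : ℕ :=
  sInf {n | ∃ X Y : QuivRep K V A t h, X.dimVec = α ∧ Y.dimVec = β ∧ QuivRep.extDim X Y = n}

/-- `hom_Q(α,β)` : the generic (minimal) value of `dim Hom_Q`. -/
def homMin (t h : A → V) (α β : V → ℕ) : ℕ :=
  sInf {n | ∃ X Y : QuivRep K V A t h, X.dimVec = α ∧ Y.dimVec = β ∧ QuivRep.homDim X Y = n}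

/-- `β' ↪ β` : every representation of dimension vector `β` has a subrepresentation of
dimension vector `β'`. -/
def Embeds (t h : A → V) (β' β : V → ℕ) : Prop :=
  ∀ X : QuivRep K V A t h, X.dimVec = β → ∃ U : QuivRep.Sub X, U.dimVec = β'

/-- `σ`-semi-stability of a representation. -/
def IsSemistable {t h : A → V} (σ : V → ℤ) (X : QuivRep K V A t h) : Prop :=
  (∑ i, σ i * (X.dimVec i : ℤ)) = 0 ∧
  ∀ U : QuivRep.Sub X, (∑ i, σ i * (U.dimVec i : ℤ)) ≤ 0

/-- `σ`-stability of a representation. -/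
def IsStable {t h : A → V} (σ : V → ℤ) (X : QuivRep K V A t h) : Prop :=
  (∑ i, σ i * (X.dimVec i : ℤ)) = 0 ∧ X.dimVec ≠ (fun _ => 0) ∧
  ∀ U : QuivRep.Sub X, U.dimVec ≠ (fun _ => 0) → U.dimVec ≠ X.dimVec →
    (∑ i, σ i * (U.dimVec i : ℤ)) < 0

/-- Isomorphism of representations. -/
def RepIso {t h : A → V} (X Y : QuivRep K V A t h) : Prop :=
  ∃ e : ∀ i, X.sp i ≃ₗ[K] Y.sp i,
    ∀ (a : A) (x : X.sp (t a)), e (h a) (X.map a x) = Y.map a (e (t a) x)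

/-- A quiver exceptional sequence of dimension vectors. -/
def IsQES (t h : A → V) {l : ℕ} (b : Fin l → V → ℕ) : Prop :=
  (∀ j, isRealSchurRoot K t h (b j)) ∧
  ∀ i j : Fin l, i < j →
    homMin K t h (b i) (b j) = 0 ∧ extMin K t h (b i) (b j) = 0 ∧
      eulerForm t h (natZ (b j)) (natZ (b i)) ≤ 0

/-- The cone of nonnegative rational linear combinations of a finite set of integral
vectors. -/
def coneOf (C : Finset (V → ℤ)) : Set (V → ℚ) :=
  {x | ∃ lam : (V → ℤ) → ℚ, (∀ c, 0 ≤ lam c) ∧ x = ∑ c ∈ C, lam c • intQ c}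

/-- A compatible subset of the set `Ψ(Q)_{≥ -1}` of almost positive real Schur roots. -/
def IsCompatible (t h : A → V) (C : Finset (V → ℤ)) : Prop :=
  (∀ x ∈ C, (∃ β : V → ℕ, isRealSchurRoot K t h β ∧ x = natZ β) ∨
      (∃ i : V, x = fun j => -(gammaRoot t h i j : ℤ))) ∧
  (∀ x ∈ C, ∀ y ∈ C, x ≠ y →
    (∀ β₁ β₂ : V → ℕ, isRealSchurRoot K t h β₁ → isRealSchurRoot K t h β₂ →
      x = natZ β₁ → y = natZ β₂ → extMin K t h β₁ β₂ = 0) ∧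
    (∀ (β : V → ℕ) (i : V), isRealSchurRoot K t h β →
      x = natZ β → y = (fun j => -(gammaRoot t h i j : ℤ)) → β i = 0))

/-- The domain of semi-invariants `D(β) ⊆ ℚ^{Q_0}`. -/
def Dom (t h : A → V) (β : V → ℕ) : Set (V → ℚ) :=
  {x | eulerForm t h x (natQ β) = 0 ∧
    ∀ β' : V → ℕ, Embeds K t h β' β → eulerForm t h x (natQ β') ≤ 0}

/-- A quiver exceptional set: a subset of `Ψ(Q)_{≥ -1}` of the form
`{β_1,…,β_l, −γ_{i_{l+1}},…,−γ_{i_m}}` with `β_j(i_k) = 0` and whose real-Schur-root part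
can be ordered into a quiver exceptional sequence. -/
def IsQExcSet (t h : A → V) (E : Finset (V → ℤ)) : Prop :=
  ∃ (l m : ℕ) (b : Fin l → V → ℕ) (g : Fin m → V),
    Function.Injective b ∧ Function.Injective g ∧ IsQES K t h b ∧
    (∀ j k, b j (g k) = 0) ∧
    (E : Set (V → ℤ)) =
      (Set.range fun j => natZ (b j)) ∪
      (Set.range fun k => (fun v => -(gammaRoot t h (g k) v : ℤ)))


/-- The underlying graph of the quiver is connected. -/
def IsConnectedQuiver (t h : A → V) : Prop :=
  ∀ i j : V,
    Relation.ReflTransGen (fun u v => ∃ a, (t a = u ∧ h a = v) ∨ (t a = v ∧ h a = u)) i j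

/-- Morphisms of representations. -/
structure RepHom {K : Type} [Field K] {V A : Type} {t h : A → V}
    (X Y : QuivRep K V A t h) : Type where
  app : ∀ i, X.sp i →ₗ[K] Y.sp i
  comm : ∀ a : A, (app (h a)).comp (X.map a) = (Y.map a).comp (app (t a))

namespace RepHom

variable {K₀ : Type} [Field K₀] {t h : A → V}

/-- The identity morphism. -/
def idHom (X : QuivRep K₀ V A t h) : RepHom X X :=
  ⟨fun _ => LinearMap.id, fun a => by ext x; simp⟩

/-- Composition of morphisms. -/
def comp {X Y Z : QuivRep K₀ V A t h} (f : RepHom X Y) (g : RepHom Y Z) : RepHom X Z :=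
  ⟨fun i => (g.app i).comp (f.app i), fun a => by
    ext x
    have hf := LinearMap.congr_fun (f.comm a) x
    have hg := LinearMap.congr_fun (g.comm a) (f.app (t a) x)
    simp only [LinearMap.comp_apply] at hf hg ⊢
    rw [hf, hg]⟩

/-- Sum of morphisms. -/
def add {X Y : QuivRep K₀ V A t h} (f g : RepHom X Y) : RepHom X Y :=
  ⟨fun i => f.app i + g.app i, fun a => by
    simp only [LinearMap.add_comp, LinearMap.comp_add, f.comm a, g.comm a]⟩

/-- Scalar multiple of a morphism. -/
def smul {X Y : QuivRep K₀ V A t h} (c : K₀) (f : RepHom X Y) : RepHom X Y :=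
  ⟨fun i => c • f.app i, fun a => by
    simp only [LinearMap.smul_comp, LinearMap.comp_smul, f.comm a]⟩

end RepHom

/-- The number of arrows `i → j` in the Ext-quiver `Q(𝓔)` of a sequence of dimension
vectors: `−⟨β_i, β_j⟩` for `i ≠ j`. -/
def extMult (t h : A → V) {l : ℕ} (b : Fin l → V → ℕ) (i j : Fin l) : ℕ :=
  if i = j then 0 else (-(eulerForm t h (natZ (b i)) (natZ (b j)))).toNat

/-- The arrow set of the Ext-quiver `Q(𝓔)`. -/
abbrev ExtArrow (t h : A → V) {l : ℕ} (b : Fin l → V → ℕ) : Type :=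
  (i : Fin l) × (j : Fin l) × Fin (extMult t h b i j)

/-- The representation space `rep(Q,β)` as a product of matrix spaces. -/
abbrev RepSpace (t h : A → V) (β : V → ℕ) : Type :=
  ∀ a : A, Matrix (Fin (β (h a))) (Fin (β (t a))) K

/-- The (base-change) action of `GL(β)` on `rep(Q,β)`. -/
def glAct (t h : A → V) {β : V → ℕ}
    (g : ∀ i, Matrix.GeneralLinearGroup (Fin (β i)) K) (W : RepSpace K t h β) :
    RepSpace K t h β :=
  fun a => (g (h a) : Matrix (Fin (β (h a))) (Fin (β (h a))) K) * W a *
    (((g (t a))⁻¹ : Matrix.GeneralLinearGroup (Fin (β (t a))) K) :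
      Matrix (Fin (β (t a))) (Fin (β (t a))) K)

/-- A polynomial function on `rep(Q,β)`. -/
def IsPolyFun (t h : A → V) {β : V → ℕ} (f : RepSpace K t h β → K) : Prop :=
  ∃ P : MvPolynomial ((a : A) × (Fin (β (h a)) × Fin (β (t a)))) K,
    ∀ W, f W = MvPolynomial.eval (fun x => W x.1 x.2.1 x.2.2) P

/-- The weight space `SI(Q,β)_σ` of semi-invariant polynomial functions of weight `σ`. -/
def SIweight (t h : A → V) (β : V → ℕ) (σ : V → ℤ) :
    Submodule K (RepSpace K t h β → K) where
  carrier := {f | IsPolyFun K t h f ∧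
    ∀ (g : ∀ i, Matrix.GeneralLinearGroup (Fin (β i)) K) (W : RepSpace K t h β),
      f (glAct K t h g W) =
        (((∏ i, (Matrix.GeneralLinearGroup.det (g i)) ^ σ i : Kˣ) : K)) * f W}
  zero_mem' := by
    refine ⟨⟨0, by simp⟩, by simp⟩
  add_mem' := by
    rintro f g ⟨⟨P, hP⟩, hf⟩ ⟨⟨Q, hQ⟩, hg⟩
    refine ⟨⟨P + Q, fun W => ?_⟩, fun gg W => ?_⟩
    · simp [hP W, hQ W]
    · simp only [Pi.add_apply, hf gg W, hg gg W]; ring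
  smul_mem' := by
    rintro c f ⟨⟨P, hP⟩, hf⟩
    refine ⟨⟨MvPolynomial.C c * P, fun W => ?_⟩, fun gg W => ?_⟩
    · simp [hP W]
    · simp only [Pi.smul_apply, hf gg W, smul_eq_mul]; ring

/-- Entry of a matrix accessed through natural-number indices. -/
def entryN {m n : ℕ} (M : Matrix (Fin m) (Fin n) K) (r c : ℕ) : K :=
  if hr : r < m then (if hc : c < n then M ⟨r, hr⟩ ⟨c, hc⟩ else 0) else 0

/-- The matrix of the map `d^V_W` (with `V` of dimension vector `α` varying and `W` of
dimension vector `w` fixed), in the standard bases. -/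
def schofieldMatrix (t h : A → V) {α w : V → ℕ}
    (Vm : RepSpace K t h α) (W : RepSpace K t h w) :
    Matrix ((a : A) × (Fin (w (h a)) × Fin (α (t a)))) ((i : V) × (Fin (w i) × Fin (α i))) K :=
  fun r c =>
    (if c.1 = h r.1 ∧ (c.2.1 : ℕ) = (r.2.1 : ℕ) then
      entryN K (Vm r.1) (c.2.2 : ℕ) (r.2.2 : ℕ) else 0)
    - (if c.1 = t r.1 ∧ (c.2.2 : ℕ) = (r.2.2 : ℕ) then
      entryN K (W r.1) (r.2.1 : ℕ) (c.2.1 : ℕ) else 0)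

/-- The Schofield semi-invariant `c_W : rep(Q,α) → K`, `V ↦ det d^V_W` (defined when
`⟨α, dim W⟩ = 0`, i.e. when `d^V_W` is a square matrix). -/
def schofieldSI (t h : A → V) {α w : V → ℕ} (W : RepSpace K t h w)
    (Vm : RepSpace K t h α) : K :=
  if hc : Fintype.card ((i : V) × (Fin (w i) × Fin (α i))) =
      Fintype.card ((a : A) × (Fin (w (h a)) × Fin (α (t a)))) then
    ((schofieldMatrix K t h Vm W).submatrix (Fintype.equivOfCardEq hc) id).det
  else 0

/-- The representation of `Q` attached to a point of `rep(Q,β)`. -/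
def toRep (t h : A → V) {β : V → ℕ} (W : RepSpace K t h β) : QuivRep K V A t h where
  sp i := Fin (β i) → K
  map a := Matrix.mulVecLin (W a)

/-! Only the existence of a stable representation needs an argument, and it suffices to find a
representation of dimension vector `β` all of whose subrepresentations have dimension vectors
`γ ↪ β`. For a fixed `γ`, the representations with a subrepresentation of dimension vector `γ` form
a Zariski closed subset of `rep(Q,β)`. Indeed, a point `x` of the Zariski closure is a
specialization, through some valuation ring, of a point with such a subrepresentation over the
fraction field. Normalizing a basis of that subrepresentation by its minor of largest valuation
makes it a direct summand over the valuation ring, so it survives in the residue field, and the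
Nullstellensatz brings it down to `K`. For the finitely many `γ ≤ β` with `γ ↪ β` false, these
closed subsets are proper, hence do not cover the irreducible affine space `rep(Q,β)`. -/

section Minors

variable {n k : Type*} [Fintype k] [DecidableEq k]

lemma mul_adjugate_submatrix_apply {R : Type*} [CommRing R]
    (M : Matrix n k R) (f : k → n) (r : n) (s : k) :
    (M * (M.submatrix f id).adjugate) r s = (M.submatrix (Function.update f s r) id).det := by
  have hrow : M.submatrix (Function.update f s r) id = (M.submatrix f id).updateRow s (M r) := by
    ext i j
    by_cases hi : i = s
    · subst hi; simp
    · simp [hi]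
  rw [hrow, ← Matrix.cramer_transpose_apply, Matrix.cramer_eq_adjugate_mulVec,
    ← Matrix.adjugate_transpose, Matrix.mulVec_transpose, Matrix.mul_apply_eq_vecMul]

lemma valuation_mul_inv_submatrix_le_one {F Γ : Type*} [Field F]
    [LinearOrderedCommGroupWithZero Γ] (v : Valuation F Γ) {M : Matrix n k F} {f : k → n}
    (hmax : ∀ f' : k → n, v (M.submatrix f' id).det ≤ v (M.submatrix f id).det) (r : n) (s : k) :
    v ((M * (M.submatrix f id)⁻¹) r s) ≤ 1 := by
  rw [Matrix.inv_def, Matrix.mul_smul, Matrix.smul_apply, mul_adjugate_submatrix_apply,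
    Ring.inverse_eq_inv', smul_eq_mul, map_mul, map_inv₀, mul_comm, ← div_eq_mul_inv]
  exact div_le_one_of_le₀ (hmax _) zero_le

variable [Fintype n]

lemma det_mul_eq_sum_prod_mul_det_submatrix {R : Type*} [CommRing R]
    (N : Matrix k n R) (M : Matrix n k R) :
    (N * M).det = ∑ f : k → n, (∏ i, N i (f i)) * (M.submatrix f id).det := by
  have hrows : N * M = Matrix.of fun i => ∑ j, N i j • M j := by
    ext i j
    simp [Matrix.mul_apply]
  calc (N * M).det = Matrix.detRowAlternating fun i => ∑ j, N i j • M j := by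
        rw [hrows]; rfl
    _ = ∑ f : k → n, Matrix.detRowAlternating fun i => N i (f i) • M (f i) :=
        Matrix.detRowAlternating.toMultilinearMap.map_sum fun i j => N i j • M j
    _ = ∑ f : k → n, (∏ i, N i (f i)) * (M.submatrix f id).det :=
        Finset.sum_congr rfl fun f _ =>
          Matrix.detRowAlternating.toMultilinearMap.map_smul_univ _ _

lemma exists_maximal_minor {F Γ : Type*} [Field F] [LinearOrderedCommGroupWithZero Γ]
    (v : Valuation F Γ) {M : Matrix n k F} {N : Matrix k n F} (hNM : N * M = 1) :
    ∃ f : k → n, (M.submatrix f id).det ≠ 0 ∧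
      ∀ f' : k → n, v (M.submatrix f' id).det ≤ v (M.submatrix f id).det := by
  have hsum : ∑ f : k → n, (∏ i, N i (f i)) * (M.submatrix f id).det ≠ 0 := by
    rw [← det_mul_eq_sum_prod_mul_det_submatrix, hNM, Matrix.det_one]
    exact one_ne_zero
  obtain ⟨f₀, -, hf₀⟩ := Finset.exists_ne_zero_of_sum_ne_zero hsum
  obtain ⟨f, -, hf⟩ := Finset.univ.exists_max_image
    (fun f : k → n => v (M.submatrix f id).det) ⟨f₀, Finset.mem_univ f₀⟩
  refine ⟨f, fun hzero => right_ne_zero_of_mul hf₀ ?_, fun f' => hf f' (Finset.mem_univ f')⟩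
  have hle := hf f₀ (Finset.mem_univ f₀)
  rwa [hzero, map_zero, le_zero_iff, map_eq_zero] at hle

lemma exists_mul_unit_eq_map_valuationSubring {F : Type*} [Field F] (O : ValuationSubring F)
    {M : Matrix n k F} {N : Matrix k n F} (hNM : N * M = 1) :
    ∃ (g : (Matrix k k F)ˣ) (M' : Matrix n k O) (N' : Matrix k n O),
      M'.map O.subtype = M * (g : Matrix k k F) ∧ N' * M' = 1 := by
  classical
  obtain ⟨f, hdet, hmax⟩ := exists_maximal_minor O.valuation hNM
  let D : Matrix k k F := M.submatrix f id
  let P : Matrix n k F := M * D⁻¹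
  have hP_mem (r : n) (s : k) : P r s ∈ O :=
    (O.valuation_le_one_iff _).mp (valuation_mul_inv_submatrix_le_one O.valuation hmax r s)
  have hP_rows : P.submatrix f id = 1 := Matrix.mul_nonsing_inv D hdet.isUnit
  let M' : Matrix n k O := Matrix.of fun r s => ⟨P r s, hP_mem r s⟩
  have hM'_rows : M'.submatrix f id = 1 := by
    apply Matrix.map_injective O.subtype_injective
    exact hP_rows.trans (Matrix.map_one _ (map_zero _) (map_one _)).symm
  refine ⟨(Matrix.GeneralLinearGroup.mkOfDetNeZero D hdet)⁻¹, M',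
    (1 : Matrix n n O).submatrix f id, ?_,
    (Matrix.one_submatrix_mul f (Equiv.refl n) M').trans hM'_rows⟩
  rw [Matrix.coe_units_inv]
  rfl

end Minors

section CommutativeAlgebra

universe u

lemma nonempty_algHom_of_finiteType (K B : Type*) [Field K] [IsAlgClosed K] [CommRing B]
    [Nontrivial B] [Algebra K B] [Algebra.FiniteType K B] : Nonempty (B →ₐ[K] K) := by
  obtain ⟨I, hI⟩ := Ideal.exists_maximal B
  let : Field (B ⧸ I) := Ideal.Quotient.field I
  have : Module.Finite K (B ⧸ I) := finite_of_finite_type_of_isJacobsonRing K (B ⧸ I)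
  let e : K ≃ₐ[K] B ⧸ I := AlgEquiv.ofBijective (Algebra.ofId K (B ⧸ I))
    IsAlgClosed.algebraMap_bijective_of_isIntegral
  exact ⟨(e.symm : B ⧸ I →ₐ[K] K).comp (Ideal.Quotient.mkₐ K I)⟩

lemma exists_field_ker_comp_le {P : Type*} {R : Type u} [CommRing P] [CommRing R] (φ : P →+* R)
    {p : Ideal P} [p.IsPrime] (hφ : RingHom.ker φ ≤ p) :
    ∃ (F : Type u) (_ : Field F) (ρ : R →+* F), RingHom.ker (ρ.comp φ) ≤ p := by
  obtain ⟨q, -, hq, hqp⟩ := p.exists_ideal_comap_le_prime ⊥ hφ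
  refine ⟨q.ResidueField, inferInstance, algebraMap R q.ResidueField, ?_⟩
  rwa [← RingHom.comap_ker, Ideal.ker_algebraMap_residueField]

lemma exists_valuationSubring_dominating {P F : Type*} [CommRing P] [Field F] (ψ : P →+* F)
    {I : Ideal P} (hI : I ≠ ⊤) (hψ : RingHom.ker ψ ≤ I) :
    ∃ (O : ValuationSubring F) (χ : P →+* O),
      O.subtype.comp χ = ψ ∧ I ≤ RingHom.ker ((IsLocalRing.residue O).comp χ) := by
  have hmap : I.map ψ.rangeRestrict ≠ ⊤ := by
    have hker : RingHom.ker ψ.rangeRestrict ≤ I := by rwa [RingHom.ker_rangeRestrict]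
    rwa [Ne, Ideal.map_eq_top_iff_of_ker_le _ hker
      (ψ.rangeRestrict.isIntegral_of_surjective ψ.rangeRestrict_surjective)]
  obtain ⟨O, hO, hcenter⟩ := (I.map ψ.rangeRestrict).image_subset_nonunits_valuationSubring hmap
  let χ : P →+* O := ψ.codRestrict O.toSubring fun x => hO ⟨x, rfl⟩
  refine ⟨O, χ, rfl, fun x hx => ?_⟩
  have hnonunit : ψ x ∈ O.nonunits :=
    hcenter ⟨ψ.rangeRestrict x, Ideal.mem_map_of_mem _ hx, rfl⟩
  rw [RingHom.mem_ker, RingHom.comp_apply, IsLocalRing.residue_eq_zero_iff]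
  exact O.coe_mem_nonunits_iff.mp hnonunit

lemma exists_forall_notMem_of_zeroLocus_vanishingIdeal_ne_univ {K σ ι : Type*} [Field K]
    [Infinite K] [Finite ι] {Z : ι → Set (σ → K)}
    (hZ : ∀ i, MvPolynomial.zeroLocus K (MvPolynomial.vanishingIdeal K (Z i)) ≠ Set.univ) :
    ∃ x, ∀ i, x ∉ Z i := by
  have := Fintype.ofFinite ι
  have hpoly (i : ι) : ∃ p ∈ MvPolynomial.vanishingIdeal K (Z i), p ≠ 0 := by
    refine Submodule.exists_mem_ne_zero_of_ne_bot fun hbot => hZ i ?_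
    rw [hbot, MvPolynomial.zeroLocus_bot, Set.top_eq_univ]
  choose p hp hp_ne using hpoly
  have hprod : ∏ i, p i ≠ 0 := Finset.prod_ne_zero_iff.mpr fun i _ => hp_ne i
  obtain ⟨x, hx⟩ : ∃ x, MvPolynomial.eval x (∏ i, p i) ≠ 0 := by
    contrapose! hprod
    exact MvPolynomial.funext fun x => by rw [hprod, map_zero]
  refine ⟨x, fun i hxi => hx ?_⟩
  rw [map_prod]
  exact Finset.prod_eq_zero (Finset.mem_univ i) (hp i x hxi)

end CommutativeAlgebra

section SplitSubrepresentations

variable {Q₀ Q₁ : Type*} {t h : Q₁ → Q₀} {n m : Q₀ → Type*}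
  [∀ i, Fintype (n i)] [∀ i, Fintype (m i)] [∀ i, DecidableEq (m i)]

/-- `IsSplitSub t h W M N` says that the column spans of the matrices `M i` form a subrepresentation
of the matrix representation `W`, over an arbitrary commutative ring, and that the inclusion `M i`
is split at each vertex by the retraction `N i`. Invariance of the column spans is the equation
`M N (W M) = W M`, which every ring homomorphism preserves. -/
structure IsSplitSub {R : Type*} [CommRing R] (t h : Q₁ → Q₀)
    (W : ∀ a, Matrix (n (h a)) (n (t a)) R) (M : ∀ i, Matrix (n i) (m i) R)
    (N : ∀ i, Matrix (m i) (n i) R) : Prop where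
  mul_eq_one : ∀ i, N i * M i = 1
  stable : ∀ a, M (h a) * (N (h a) * (W a * M (t a))) = W a * M (t a)

/-- The matrix representation `W` has a subrepresentation which at each vertex `i` is a direct
summand, free with basis indexed by `m i`. -/
def HasSplitSub {R : Type*} [CommRing R] (t h : Q₁ → Q₀) (m : Q₀ → Type*) [∀ i, Fintype (m i)]
    [∀ i, DecidableEq (m i)] (W : ∀ a, Matrix (n (h a)) (n (t a)) R) : Prop :=
  ∃ (M : ∀ i, Matrix (n i) (m i) R) (N : ∀ i, Matrix (m i) (n i) R), IsSplitSub t h W M N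

namespace IsSplitSub

variable {R : Type*} [CommRing R] {W : ∀ a, Matrix (n (h a)) (n (t a)) R}
  {M : ∀ i, Matrix (n i) (m i) R} {N : ∀ i, Matrix (m i) (n i) R}

lemma map (hMN : IsSplitSub t h W M N) {S : Type*} [CommRing S] (f : R →+* S) :
    IsSplitSub t h (fun a => (W a).map f) (fun i => (M i).map f) (fun i => (N i).map f) where
  mul_eq_one i := by
    rw [← Matrix.map_mul, hMN.mul_eq_one, Matrix.map_one _ (map_zero f) (map_one f)]
  stable a := by
    simp only [← Matrix.map_mul, hMN.stable]

lemma of_forall_map {ι : Type*} {S : ι → Type*} [∀ z, CommRing (S z)] (f : ∀ z, R →+* S z)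
    (hf : ∀ r s, (∀ z, f z r = f z s) → r = s)
    (hMN : ∀ z, IsSplitSub t h (fun a => (W a).map (f z)) (fun i => (M i).map (f z))
      (fun i => (N i).map (f z))) :
    IsSplitSub t h W M N where
  mul_eq_one i := by
    ext r s
    refine hf _ _ fun z => congrFun₂ (?_ : (N i * M i).map (f z) = Matrix.map 1 (f z)) r s
    rw [Matrix.map_mul, (hMN z).mul_eq_one, Matrix.map_one _ (map_zero _) (map_one _)]
  stable a := by
    ext r s
    refine hf _ _ fun z => congrFun₂
      (?_ : (M (h a) * (N (h a) * (W a * M (t a)))).map (f z) = (W a * M (t a)).map (f z)) r s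
    simp only [Matrix.map_mul]
    exact (hMN z).stable a

lemma of_map_injective {S : Type*} [CommRing S] {f : R →+* S} (hf : Function.Injective f)
    (hMN : IsSplitSub t h (fun a => (W a).map f) (fun i => (M i).map f) (fun i => (N i).map f)) :
    IsSplitSub t h W M N :=
  of_forall_map (fun _ : Unit => f) (fun _ _ hrs => hf (hrs ())) fun _ => hMN

lemma of_mul_eq_mul (hNM : ∀ i, N i * M i = 1) {C : ∀ a, Matrix (m (h a)) (m (t a)) R}
    (hC : ∀ a, M (h a) * C a = W a * M (t a)) : IsSplitSub t h W M N where
  mul_eq_one := hNM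
  stable a := by
    rw [← hC, ← Matrix.mul_assoc (N (h a)), hNM, Matrix.one_mul]

lemma mul_units (hMN : IsSplitSub t h W M N) (g : ∀ i, (Matrix (m i) (m i) R)ˣ)
    {N' : ∀ i, Matrix (m i) (n i) R}
    (hN' : ∀ i, N' i * (M i * (g i).val) = 1) :
    IsSplitSub t h W (fun i => M i * (g i).val) N' := by
  refine of_mul_eq_mul hN'
    (C := fun a => (g (h a)).inv * (N (h a) * (W a * M (t a))) * (g (t a)).val) fun a => ?_
  calc M (h a) * (g (h a)).val * ((g (h a)).inv * (N (h a) * (W a * M (t a))) * (g (t a)).val)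
      = M (h a) * ((g (h a)).val * (g (h a)).inv) * (N (h a) * (W a * M (t a))) *
          (g (t a)).val := by
        simp only [Matrix.mul_assoc]
    _ = W a * (M (t a) * (g (t a)).val) := by
        rw [Units.val_inv, Matrix.mul_one, hMN.stable, Matrix.mul_assoc]

end IsSplitSub

namespace HasSplitSub

lemma map {R S : Type*} [CommRing R] [CommRing S] {W : ∀ a, Matrix (n (h a)) (n (t a)) R}
    (hW : HasSplitSub t h m W) (f : R →+* S) : HasSplitSub t h m fun a => (W a).map f := by
  obtain ⟨M, N, hMN⟩ := hW
  exact ⟨_, _, hMN.map f⟩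

lemma pi {P ι : Type*} {R : ι → Type*} [CommRing P] [∀ z, CommRing (R z)]
    {W : ∀ a, Matrix (n (h a)) (n (t a)) P} {f : ∀ z, P →+* R z}
    (hW : ∀ z, HasSplitSub t h m fun a => (W a).map (f z)) :
    HasSplitSub t h m fun a => (W a).map (RingHom.pi f) := by
  choose M N hMN using hW
  exact ⟨fun i => Matrix.of fun r s z => M z i r s, fun i => Matrix.of fun r s z => N z i r s,
    .of_forall_map (Pi.evalRingHom R) (fun _ _ => funext) hMN⟩

lemma of_valuationSubring {F : Type*} [Field F] (O : ValuationSubring F)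
    {W : ∀ a, Matrix (n (h a)) (n (t a)) O}
    (hW : HasSplitSub t h m fun a => (W a).map O.subtype) : HasSplitSub t h m W := by
  obtain ⟨M, N, hMN⟩ := hW
  choose g M' N' hM' hN' using
    fun i => exists_mul_unit_eq_map_valuationSubring O (hMN.mul_eq_one i)
  refine ⟨M', N', .of_map_injective O.subtype_injective ?_⟩
  simp only [hM']
  refine hMN.mul_units g fun i => ?_
  rw [← hM', ← Matrix.map_mul, hN', Matrix.map_one _ (map_zero _) (map_one _)]

lemma exists_fg_subalgebra [Finite Q₀] {K A : Type*} [CommRing K] [CommRing A] [Algebra K A]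
    {W : ∀ a, Matrix (n (h a)) (n (t a)) K}
    (hW : HasSplitSub t h m fun a => (W a).map (algebraMap K A)) :
    ∃ B : Subalgebra K A, B.FG ∧ HasSplitSub t h m fun a => (W a).map (algebraMap K B) := by
  obtain ⟨M, N, hMN⟩ := hW
  let s : Set A := (Set.range fun x : Σ i, n i × m i => M x.1 x.2.1 x.2.2) ∪
    Set.range fun x : Σ i, m i × n i => N x.1 x.2.1 x.2.2
  let M' (i) : Matrix (n i) (m i) (Algebra.adjoin K s) := Matrix.of fun r s' =>
    ⟨M i r s', Algebra.subset_adjoin (.inl ⟨⟨i, r, s'⟩, rfl⟩)⟩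
  let N' (i) : Matrix (m i) (n i) (Algebra.adjoin K s) := Matrix.of fun r s' =>
    ⟨N i r s', Algebra.subset_adjoin (.inr ⟨⟨i, r, s'⟩, rfl⟩)⟩
  exact ⟨Algebra.adjoin K s,
    Subalgebra.fg_def.mpr ⟨s, (Set.finite_range _).union (Set.finite_range _), rfl⟩, M', N',
    .of_map_injective (f := (Algebra.adjoin K s).val.toRingHom) Subtype.val_injective hMN⟩

lemma of_algebraMap [Finite Q₀] {K A : Type*} [Field K] [IsAlgClosed K] [CommRing A]
    [Nontrivial A] [Algebra K A] {W : ∀ a, Matrix (n (h a)) (n (t a)) K}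
    (hW : HasSplitSub t h m fun a => (W a).map (algebraMap K A)) : HasSplitSub t h m W := by
  obtain ⟨B, hB, hWB⟩ := hW.exists_fg_subalgebra
  have : Algebra.FiniteType K B := B.fg_iff_finiteType.mp hB
  obtain ⟨ε⟩ := nonempty_algHom_of_finiteType K B
  simpa [Matrix.map_map, Function.comp_def] using hWB.map (ε : B →+* K)

lemma of_ker_le [Finite Q₀] {P R K : Type*} [CommRing P] [CommRing R] [Field K] [IsAlgClosed K]
    {W : ∀ a, Matrix (n (h a)) (n (t a)) P} {φ : P →+* R} {ev : P →+* K}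
    (hev : Function.Surjective ev) (hker : RingHom.ker φ ≤ RingHom.ker ev)
    (hW : HasSplitSub t h m fun a => (W a).map φ) :
    HasSplitSub t h m fun a => (W a).map ev := by
  have : (RingHom.ker ev).IsPrime := RingHom.ker_isPrime ev
  obtain ⟨F, _, ρ, hρ⟩ := exists_field_ker_comp_le φ hker
  obtain ⟨O, χ, hχ, hcenter⟩ := exists_valuationSubring_dominating (ρ.comp φ)
    (RingHom.ker_ne_top ev) hρ
  have hF : HasSplitSub t h m fun a => ((W a).map χ).map O.subtype := by
    have hentry (x : P) : O.subtype (χ x) = ρ (φ x) := RingHom.congr_fun hχ x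
    simpa only [Matrix.map_map, Function.comp_def, hentry] using hW.map ρ
  have hresidue := hF.of_valuationSubring.map (IsLocalRing.residue O)
  let lift : K →+* IsLocalRing.ResidueField O :=
    ev.liftOfSurjective hev ⟨(IsLocalRing.residue O).comp χ, hcenter⟩
  have hlift (x : P) : lift (ev x) = IsLocalRing.residue O (χ x) :=
    ev.liftOfRightInverse_comp_apply _ _ _ x
  let : Algebra K (IsLocalRing.ResidueField O) := lift.toAlgebra
  refine of_algebraMap (A := IsLocalRing.ResidueField O) ?_
  simpa only [Matrix.map_map, Function.comp_def, RingHom.algebraMap_toAlgebra, hlift] using hresidue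

end HasSplitSub

end SplitSubrepresentations

section ZariskiClosedness

variable {Q₀ Q₁ : Type*} (t h : Q₁ → Q₀) {n : Q₀ → Type*} (m : Q₀ → Type*)

/-- The matrices attached to a point of the affine space of matrix representations, whose
coordinates are indexed by the triples (arrow, row, column). -/
def coordMatrices {R : Type*} (x : (Σ a, n (h a) × n (t a)) → R) (a : Q₁) :
    Matrix (n (h a)) (n (t a)) R :=
  Matrix.of fun r s => x ⟨a, r, s⟩

variable [∀ i, Fintype (n i)] [∀ i, Fintype (m i)] [∀ i, DecidableEq (m i)]

/-- The points of the affine space of matrix representations which have a subrepresentation with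
bases indexed by `m`; over a field every subspace splits. -/
def splitSubLocus (K : Type*) [Field K] : Set ((Σ a, n (h a) × n (t a)) → K) :=
  {x | HasSplitSub t h m (coordMatrices t h x)}

theorem zeroLocus_vanishingIdeal_splitSubLocus [Finite Q₀] (K : Type*) [Field K] [IsAlgClosed K] :
    MvPolynomial.zeroLocus K (MvPolynomial.vanishingIdeal K (splitSubLocus t h (n := n) m K)) =
      splitSubLocus t h m K := by
  refine Set.Subset.antisymm (fun x hx => ?_) (MvPolynomial.zeroLocus_vanishingIdeal_le _)
  let P := MvPolynomial (Σ a, n (h a) × n (t a)) K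
  let evals : P →+* splitSubLocus t h (n := n) m K → K :=
    RingHom.pi fun z => MvPolynomial.eval z.1
  have hker : RingHom.ker evals ≤ RingHom.ker (MvPolynomial.eval x) := fun p hp =>
    hx p fun z hz => congrFun hp ⟨z, hz⟩
  have hcoord (z : (Σ a, n (h a) × n (t a)) → K) :
      (fun a => (coordMatrices t h (MvPolynomial.X (R := K)) a).map (MvPolynomial.eval z)) =
        coordMatrices t h z := by
    ext a r s
    exact MvPolynomial.eval_X _
  have hgeneric : HasSplitSub t h m fun a =>
      (coordMatrices t h (MvPolynomial.X (R := K)) a).map evals :=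
    .pi fun z => by
      rw [hcoord]
      exact z.2
  have hx_split := hgeneric.of_ker_le (fun c => ⟨MvPolynomial.C c, MvPolynomial.eval_C c⟩) hker
  rwa [hcoord] at hx_split

end ZariskiClosedness

section Representations

variable {K : Type} [Field K] {Q₀ Q₁ : Type} {t h : Q₁ → Q₀}

lemma exists_sub_dimVec_eq_card_iff (X : QuivRep K Q₀ Q₁ t h) (m : Q₀ → Type*)
    [∀ i, Fintype (m i)] :
    (∃ U : QuivRep.Sub X, U.dimVec = fun i => Fintype.card (m i)) ↔
      ∃ (f : ∀ i, (m i → K) →ₗ[K] X.sp i) (g : ∀ i, X.sp i →ₗ[K] m i → K),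
        (∀ i, g i ∘ₗ f i = LinearMap.id) ∧
        ∀ a, f (h a) ∘ₗ g (h a) ∘ₗ X.map a ∘ₗ f (t a) = X.map a ∘ₗ f (t a) := by
  constructor
  · rintro ⟨U, hU⟩
    have e (i : Q₀) : (m i → K) ≃ₗ[K] U.sub i :=
      LinearEquiv.ofFinrankEq _ _
        ((Module.finrank_fintype_fun_eq_card K).trans (congrFun hU i).symm)
    let f (i : Q₀) : (m i → K) →ₗ[K] X.sp i := (U.sub i).subtype ∘ₗ (e i).toLinearMap
    have hf (i : Q₀) : LinearMap.ker (f i) = ⊥ :=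
      LinearMap.ker_eq_bot.mpr ((U.sub i).injective_subtype.comp (e i).injective)
    choose g hg using fun i => (f i).exists_leftInverse_of_injective (hf i)
    have hfg (i : Q₀) (y : X.sp i) (hy : y ∈ U.sub i) : f i (g i y) = y := by
      obtain ⟨x, hx⟩ := (e i).surjective ⟨y, hy⟩
      have hfx : f i x = y := congrArg Subtype.val hx
      rw [← hfx, ← LinearMap.comp_apply (g i), hg, LinearMap.id_apply]
    exact ⟨f, g, hg, fun a => LinearMap.ext fun x => hfg (h a) _ (U.le a _ (e (t a) x).2)⟩
  · rintro ⟨f, g, hgf, hstable⟩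
    refine ⟨⟨fun i => LinearMap.range (f i), ?_⟩, funext fun i => ?_⟩
    · rintro a _ ⟨x, rfl⟩
      exact ⟨_, LinearMap.congr_fun (hstable a) x⟩
    · have hf : Function.Injective (f i) :=
        Function.LeftInverse.injective (LinearMap.congr_fun (hgf i))
      exact (LinearMap.finrank_range_of_inj hf).trans (Module.finrank_fintype_fun_eq_card K)

lemma exists_sub_dimVec_eq_card_iff_hasSplitSub (X : QuivRep K Q₀ Q₁ t h) {n : Q₀ → Type*}
    (m : Q₀ → Type*) [∀ i, Fintype (n i)] [∀ i, DecidableEq (n i)] [∀ i, Fintype (m i)]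
    [∀ i, DecidableEq (m i)] (b : ∀ i, Module.Basis (n i) K (X.sp i)) :
    (∃ U : QuivRep.Sub X, U.dimVec = fun i => Fintype.card (m i)) ↔
      HasSplitSub t h m fun a => LinearMap.toMatrix (b (t a)) (b (h a)) (X.map a) := by
  let c (i : Q₀) : Module.Basis (m i) K (m i → K) := Pi.basisFun K (m i)
  rw [exists_sub_dimVec_eq_card_iff]
  constructor
  · rintro ⟨f, g, hgf, hstable⟩
    refine ⟨fun i => LinearMap.toMatrix (c i) (b i) (f i),
      fun i => LinearMap.toMatrix (b i) (c i) (g i), fun i => ?_, fun a => ?_⟩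
    · rw [← LinearMap.toMatrix_comp, hgf, LinearMap.toMatrix_id]
    · simp only [← LinearMap.toMatrix_comp, hstable]
  · rintro ⟨M, N, hMN⟩
    refine ⟨fun i => Matrix.toLin (c i) (b i) (M i), fun i => Matrix.toLin (b i) (c i) (N i),
      fun i => ?_, fun a => ?_⟩
    · rw [← Matrix.toLin_mul, hMN.mul_eq_one, Matrix.toLin_one]
    · apply (LinearMap.toMatrix (c (t a)) (b (h a))).injective
      simpa only [LinearMap.toMatrix_comp (c (t a)) (c (h a)) (b (h a)),
        LinearMap.toMatrix_comp (c (t a)) (b (h a)) (c (h a)),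
        LinearMap.toMatrix_comp (c (t a)) (b (t a)) (b (h a)),
        LinearMap.toMatrix_toLin] using hMN.stable a

lemma dimVec_toRep {β : Q₀ → ℕ} (W : RepSpace K t h β) : (toRep K t h W).dimVec = β :=
  funext fun _ => Module.finrank_fin_fun K

lemma exists_sub_toRep_dimVec_eq_iff {β γ : Q₀ → ℕ} (W : RepSpace K t h β) :
    (∃ U : QuivRep.Sub (toRep K t h W), U.dimVec = γ) ↔
      HasSplitSub t h (n := fun i => Fin (β i)) (fun i => Fin (γ i)) W := by
  have hiff := exists_sub_dimVec_eq_card_iff_hasSplitSub (toRep K t h W) (fun i => Fin (γ i))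
    fun i => Pi.basisFun K (Fin (β i))
  have hmatrix (a : Q₁) : LinearMap.toMatrix (Pi.basisFun K (Fin (β (t a))))
      (Pi.basisFun K (Fin (β (h a)))) ((toRep K t h W).map a) = W a :=
    LinearMap.toMatrix'_toLin' (W a)
  simp only [Fintype.card_fin] at hiff
  exact hiff.trans (iff_of_eq (congrArg (HasSplitSub t h _) (funext hmatrix)))

lemma splitSubLocus_ne_univ_of_not_embeds {β γ : Q₀ → ℕ} (hγ : ¬ Embeds K t h γ β) :
    splitSubLocus t h (n := fun i => Fin (β i)) (fun i => Fin (γ i)) K ≠ Set.univ := by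
  simp only [Embeds, not_forall] at hγ
  obtain ⟨X, hX, hU⟩ := hγ
  let b (i : Q₀) : Module.Basis (Fin (β i)) K (X.sp i) :=
    Module.finBasisOfFinrankEq K (X.sp i) (congrFun hX i)
  have hiff := exists_sub_dimVec_eq_card_iff_hasSplitSub X (fun i => Fin (γ i)) b
  simp only [Fintype.card_fin] at hiff
  intro huniv
  exact hU (hiff.mpr (Set.eq_univ_iff_forall.mp huniv fun x =>
    LinearMap.toMatrix (b (t x.1)) (b (h x.1)) (X.map x.1) x.2.1 x.2.2))

theorem exists_rep_forall_sub_embeds [IsAlgClosed K] [Finite Q₀] (t h : Q₁ → Q₀) (β : Q₀ → ℕ) :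
    ∃ X : QuivRep K Q₀ Q₁ t h, X.dimVec = β ∧ ∀ U : QuivRep.Sub X, Embeds K t h U.dimVec β := by
  classical
  have := Fintype.ofFinite Q₀
  have : Infinite K := IsAlgClosed.instInfinite
  obtain ⟨x, hx⟩ := exists_forall_notMem_of_zeroLocus_vanishingIdeal_ne_univ
    (Z := fun γ : {γ : Set.Iic β // ¬ Embeds K t h γ β} =>
      splitSubLocus t h (n := fun i => Fin (β i)) (fun i => Fin (γ.1.1 i)) K)
    fun γ => by
      rw [zeroLocus_vanishingIdeal_splitSubLocus]
      exact splitSubLocus_ne_univ_of_not_embeds γ.2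
  let W : RepSpace K t h β := coordMatrices t h (n := fun i => Fin (β i)) x
  refine ⟨toRep K t h W, dimVec_toRep W, fun U => by_contra fun hU => ?_⟩
  have hle : U.dimVec ≤ β := fun i =>
    (Submodule.finrank_le (U.sub i)).trans_eq (congrFun (dimVec_toRep W) i)
  exact hx ⟨⟨U.dimVec, hle⟩, hU⟩ ((exists_sub_toRep_dimVec_eq_iff W).mp ⟨U, rfl⟩)

end Representations

theorem stmt1_general {K : Type} [Field K] [IsAlgClosed K] {Q₀ Q₁ : Type} [Fintype Q₀]
    (t h : Q₁ → Q₀) (β : Q₀ → ℕ) (σ : Q₀ → ℤ) :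
    (∃ W : QuivRep K Q₀ Q₁ t h, W.dimVec = β ∧ IsStable K σ W) ↔
      (β ≠ (fun _ => 0) ∧ (∑ i, σ i * (β i : ℤ)) = 0 ∧
        ∀ β' : Q₀ → ℕ, Embeds K t h β' β → β' ≠ (fun _ => 0) → β' ≠ β →
          (∑ i, σ i * (β' i : ℤ)) < 0) := by
  constructor
  · rintro ⟨W, rfl, hweight, hne, hstable⟩
    refine ⟨hne, hweight, fun β' hembeds => ?_⟩
    obtain ⟨U, rfl⟩ := hembeds W rfl
    exact hstable U
  · rintro ⟨hne, hweight, hneg⟩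
    obtain ⟨X, rfl, hX⟩ := exists_rep_forall_sub_embeds (K := K) t h β
    exact ⟨X, rfl, hweight, hne, fun U => hneg _ (hX U)⟩

/-- There exists a `σ`-stable representation of dimension vector `β`
iff `β ≠ 0`, `σ(β) = 0` and `σ(β') < 0` for every `β' ↪ β` with `β' ≠ 0, β`. -/
theorem stmt1 [IsAlgClosed K] [CharZero K] (t h : A → V) (hQ : Acyclic t h)
    (β : V → ℕ) (σ : V → ℤ) :
    (∃ W : QuivRep K V A t h, W.dimVec = β ∧ IsStable K σ W) ↔
      (β ≠ (fun _ => 0) ∧ (∑ i, σ i * (β i : ℤ)) = 0 ∧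
        ∀ β' : V → ℕ, Embeds K t h β' β → β' ≠ (fun _ => 0) → β' ≠ β →
          (∑ i, σ i * (β' i : ℤ)) < 0) :=
  stmt1_general t h β σ

end
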